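/- An auction consists of a finite set $M$ of indivisible items and agents $1,\dots,n$, each with a valuation $v_i:2^M\to\mathbb R$ that is nonnegative, monotone and satisfies $v_i(\emptyset)=0$. Its configuration LP has variables $y_{i,S}\in[0,1]$ for each agent $i$ and each $S\subseteq M$, and maximizes $\sum_{i,S}v_i(S)\,y_{i,S}$ subject to $\sum_S y_{i,S}\le 1$ for each agent $i$ and $\sum_{i,\,S\ni j}y_{i,S}\le 1$ for each item $j$. An integral allocation assigns pairwise disjoint bundles $X_1,\dots,X_n\subseteq M$ to the agents (items may remain unallocated); its social welfare is $\sum_i v_i(X_i)$. Fix an integer $m\ge 2$ and a real $\delta$ with $0<\delta<\frac{1}{2(m-1)}$, and consider the item set $M=\{1,\dots,m\}$ and two agents, where $v_1(\emptyset)=v_2(\emptyset)=0$ and, for every nonempty $S\subseteq M$, $v_1(S)=\frac12-\delta$ and $v_2(S)=\max(1,|S|/2)$. Then $v_1$ and $v_2$ are nonnegative, monotone and normalized, so this is an auction. The fractional solution of its configuration LP given by $y_{1,\{j\}}=\frac1m$ for every item $j$, $y_{2,\{j\}}=\frac{1}{m(m-1)}$ for every item $j$, and $y_{2,M}=\frac{m-2}{m-1}$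 (all other variables $0$) is feasible and has objective value $\frac m2+\frac{1}{2(m-1)}-\delta$, which is strictly greater than $\frac m2$. If moreover $m\ge 3$, then $\frac m2$ is the maximal social welfare of an integral allocation, so the fractional solution strictly beats every integral one. -/

import Mathlib

namespace Auction

/-- A valuation on bundles of items: nonnegative, monotone and normalized. -/
def IsValuation {M : Type*} (v : Finset M → ℝ) : Prop :=
  (∀ S, 0 ≤ v S) ∧ (∀ S T : Finset M, S ⊆ T → v S ≤ v T) ∧ v ∅ = 0

/-- An integral allocation: the agents' bundles are pairwise disjoint
(items outside all bundles are unallocated). -/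
def IsAllocation {N M : Type*} (X : N → Finset M) : Prop :=
  ∀ i k, i ≠ k → Disjoint (X i) (X k)

/-- Social welfare of an integral allocation. -/
def socialWelfare {N M : Type*} [Fintype N] (v : N → Finset M → ℝ) (X : N → Finset M) : ℝ :=
  ∑ i, v i (X i)

/-- Feasibility for the configuration LP: all variables lie in `[0,1]`, every agent receives total
weight at most one, and every item is used with total weight at most one. -/
def IsLPFeasible {N M : Type*} [Fintype N] [Fintype M] [DecidableEq M]
    (y : N → Finset M → ℝ) : Prop :=
  (∀ i S, y i S ∈ Set.Icc (0 : ℝ) 1) ∧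
  (∀ i, ∑ S : Finset M, y i S ≤ 1) ∧
  (∀ j : M, ∑ i, ∑ S : Finset M with j ∈ S, y i S ≤ 1)

/-- Objective value of the configuration LP. -/
def lpValue {N M : Type*} [Fintype N] [Fintype M]
    (v : N → Finset M → ℝ) (y : N → Finset M → ℝ) : ℝ :=
  ∑ i, ∑ S : Finset M, v i S * y i S

/-- The valuations of the two agents (agent `0` is the first one, agent `1` the second one). -/
noncomputable def exampleVal (m : ℕ) (δ : ℝ) : Fin 2 → Finset (Fin m) → ℝ :=
  ![fun S => if S = ∅ then 0 else 1 / 2 - δ,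
    fun S => if S = ∅ then 0 else max 1 ((S.card : ℝ) / 2)]

/-- The fractional solution. The bundles of cardinality one are the singletons `{j}`. -/
noncomputable def exampleSol (m : ℕ) : Fin 2 → Finset (Fin m) → ℝ :=
  ![fun S => if S.card = 1 then 1 / (m : ℝ) else 0,
    fun S => if S.card = 1 then 1 / ((m : ℝ) * ((m : ℝ) - 1))
      else if S = Finset.univ then ((m : ℝ) - 2) / ((m : ℝ) - 1) else 0]

end Auction

namespace Auction

theorem sum_ite_card_eq_one {M : Type*} [Fintype M] [DecidableEq M] (g : Finset M → ℝ) :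
    ∑ S : Finset M, (if S.card = 1 then g S else 0) = ∑ j, g {j} := by
  rw [← Finset.sum_filter]
  symm
  refine Finset.sum_bij (fun j _ => {j}) (by simp) (by simp) ?_ (by simp)
  intro S hS
  obtain ⟨j, rfl⟩ := Finset.card_eq_one.1 (Finset.mem_filter.1 hS).2
  exact ⟨j, Finset.mem_univ _, rfl⟩

theorem sum_mul_exampleSol_zero (m : ℕ) (f : Finset (Fin m) → ℝ) :
    ∑ S, f S * exampleSol m 0 S = ∑ j, f {j} * (1 / (m : ℝ)) := by
  rw [← sum_ite_card_eq_one fun S => f S * (1 / (m : ℝ))]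
  simp [exampleSol]

theorem sum_mul_exampleSol_one {m : ℕ} (hm : 2 ≤ m) (f : Finset (Fin m) → ℝ) :
    ∑ S, f S * exampleSol m 1 S = ∑ j, f {j} * (1 / ((m : ℝ) * ((m : ℝ) - 1))) +
      f Finset.univ * (((m : ℝ) - 2) / ((m : ℝ) - 1)) := by
  rw [← sum_ite_card_eq_one fun S => f S * (1 / ((m : ℝ) * ((m : ℝ) - 1))),
    ← Fintype.sum_ite_eq' (Finset.univ : Finset (Fin m))
      (fun S => f S * (((m : ℝ) - 2) / ((m : ℝ) - 1))), ← Finset.sum_add_distrib]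
  refine Finset.sum_congr rfl fun S _ => ?_
  by_cases h1 : S.card = 1
  · have h2 : S ≠ Finset.univ := by
      rintro rfl
      simp at h1
      omega
    simp [exampleSol, h1, h2]
  · simp [exampleSol, h1]

theorem isValuation_ite_empty {M : Type*} [DecidableEq M] {g : Finset M → ℝ}
    (h0 : ∀ S, 0 ≤ g S) (hg : ∀ S T, S ⊆ T → g S ≤ g T) :
    IsValuation fun S => if S = ∅ then 0 else g S := by
  refine ⟨fun S => ?_, fun S T hST => ?_, by simp⟩
  · dsimp only
    split_ifs
    exacts [le_rfl, h0 S]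
  · dsimp only
    by_cases hS : S = ∅
    · rw [if_pos hS]
      split_ifs
      exacts [le_rfl, h0 T]
    · have hT : T ≠ ∅ := by
        rintro rfl
        exact hS (Finset.subset_empty.1 hST)
      rw [if_neg hS, if_neg hT]
      exact hg S T hST

theorem isValuation_exampleVal {m : ℕ} {δ : ℝ} (hδ : δ ≤ 1 / 2) (i : Fin 2) :
    IsValuation (exampleVal m δ i) := by
  fin_cases i
  · exact isValuation_ite_empty (g := fun _ => 1 / 2 - δ) (fun _ => by linarith)
      fun _ _ _ => le_rfl
  · refine isValuation_ite_empty (g := fun S => max 1 ((S.card : ℝ) / 2))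
      (fun _ => le_max_of_le_left zero_le_one) fun S T hST => ?_
    have := Finset.card_le_card hST
    gcongr

theorem isLPFeasible_exampleSol {m : ℕ} (hm : 2 ≤ m) : IsLPFeasible (exampleSol m) := by
  have hm' : (2 : ℝ) ≤ m := by exact_mod_cast hm
  have h0 : (m : ℝ) ≠ 0 := by linarith
  have h1 : (m : ℝ) - 1 ≠ 0 := by linarith
  have hnn : ∀ i S, 0 ≤ exampleSol m i S := by
    intro i S
    have := sub_nonneg.2 hm'
    have : 0 ≤ (m : ℝ) - 1 := by linarith
    fin_cases i <;> simp only [exampleSol, Fin.zero_eta, Fin.mk_one, Matrix.cons_val_zero,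
      Matrix.cons_val_one] <;> split_ifs <;> positivity
  have hsum : ∀ i, ∑ S : Finset (Fin m), exampleSol m i S = 1 := by
    rw [Fin.forall_fin_two]
    have e0 := sum_mul_exampleSol_zero m fun _ => 1
    have e1 := sum_mul_exampleSol_one hm fun _ => 1
    simp only [one_mul, Finset.sum_const, Finset.card_univ, Fintype.card_fin, nsmul_eq_mul]
      at e0 e1
    rw [e0, e1]
    constructor
    · field_simp
    · field_simp
      ring
  refine ⟨fun i S => ⟨hnn i S, ?_⟩, fun i => (hsum i).le, fun j => le_of_eq ?_⟩
  · rw [← hsum i]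
    exact Finset.single_le_sum (fun T _ => hnn i T) (Finset.mem_univ S)
  · have e0 := sum_mul_exampleSol_zero m fun S => if j ∈ S then 1 else 0
    have e1 := sum_mul_exampleSol_one hm fun S => if j ∈ S then 1 else 0
    simp only [ite_mul, one_mul, zero_mul, Finset.mem_singleton, Finset.mem_univ, if_true,
      Finset.sum_ite_eq] at e0 e1
    rw [Fin.sum_univ_two, Finset.sum_filter, Finset.sum_filter, e0, e1]
    field_simp
    ring

theorem exampleVal_one_univ {m : ℕ} (hm : 2 ≤ m) (δ : ℝ) :
    exampleVal m δ 1 Finset.univ = m / 2 := by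
  have hm' : (2 : ℝ) ≤ m := by exact_mod_cast hm
  have hne : (Finset.univ : Finset (Fin m)) ≠ ∅ :=
    Finset.ne_empty_of_mem (Finset.mem_univ (⟨0, by omega⟩ : Fin m))
  have hmax : max 1 ((m : ℝ) / 2) = m / 2 := max_eq_right (by linarith)
  simp only [exampleVal, Matrix.cons_val_one, if_neg hne, Finset.card_univ, Fintype.card_fin,
    Matrix.cons_val_fin_one, hmax]

theorem lpValue_example {m : ℕ} (hm : 2 ≤ m) (δ : ℝ) :
    lpValue (exampleVal m δ) (exampleSol m)
      = (m : ℝ) / 2 + 1 / (2 * ((m : ℝ) - 1)) - δ := by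
  have hm' : (2 : ℝ) ≤ m := by exact_mod_cast hm
  have h0 : (m : ℝ) ≠ 0 := by linarith
  have h1 : (m : ℝ) - 1 ≠ 0 := by linarith
  have hv0 : ∀ j, exampleVal m δ 0 {j} = 1 / 2 - δ := fun j => by simp [exampleVal]
  have hv1 : ∀ j, exampleVal m δ 1 {j} = 1 := fun j => by
    simp [exampleVal]
    norm_num
  have hvu := exampleVal_one_univ hm δ
  rw [lpValue, Fin.sum_univ_two, sum_mul_exampleSol_zero, sum_mul_exampleSol_one hm]
  simp only [hv0, hv1, hvu, Finset.sum_const, Finset.card_univ, Fintype.card_fin, nsmul_eq_mul]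
  field_simp
  ring

theorem isGreatest_socialWelfare_example {m : ℕ} (hm : 3 ≤ m) {δ : ℝ} (hδ : 0 ≤ δ) :
    IsGreatest {w : ℝ | ∃ X : Fin 2 → Finset (Fin m),
      IsAllocation X ∧ w = socialWelfare (exampleVal m δ) X} ((m : ℝ) / 2) := by
  have hm' : (3 : ℝ) ≤ m := by exact_mod_cast hm
  constructor
  · refine ⟨![∅, Finset.univ], ?_, ?_⟩
    · intro i k hik
      fin_cases i <;> fin_cases k <;> simp at hik ⊢
    · have hv0 : exampleVal m δ 0 ∅ = 0 := by simp [exampleVal]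
      simp [socialWelfare, hv0, exampleVal_one_univ (by omega : 2 ≤ m) δ]
  · rintro w ⟨X, hX, rfl⟩
    have hcard : (X 0).card + (X 1).card ≤ m := by
      rw [← Finset.card_union_of_disjoint (hX 0 1 (by decide))]
      simpa using Finset.card_le_univ (X 0 ∪ X 1)
    have hcard' : ((X 0).card : ℝ) + (X 1).card ≤ m := by exact_mod_cast hcard
    have hv1 : exampleVal m δ 1 (X 1) ≤ max 1 (((X 1).card : ℝ) / 2) := by
      simp only [exampleVal, Matrix.cons_val_one, Matrix.cons_val_fin_one]
      split_ifs
      · exact le_max_of_le_left zero_le_one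
      · exact le_rfl
    rw [socialWelfare, Fin.sum_univ_two]
    by_cases h0 : X 0 = ∅
    · have hv0 : exampleVal m δ 0 (X 0) = 0 := by simp [exampleVal, h0]
      have : max 1 (((X 1).card : ℝ) / 2) ≤ m / 2 :=
        max_le (by linarith) (by linarith [Nat.cast_nonneg (α := ℝ) (X 0).card])
      linarith
    · have hv0 : exampleVal m δ 0 (X 0) = 1 / 2 - δ := by simp [exampleVal, h0]
      have hpos : (1 : ℝ) ≤ (X 0).card := by
        exact_mod_cast Finset.card_pos.2 (Finset.nonempty_iff_ne_empty.2 h0)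
      have : max 1 (((X 1).card : ℝ) / 2) ≤ m / 2 - 1 / 2 :=
        max_le (by linarith) (by linarith)
      linarith

end Auction

theorem configuration_lp_fractional_beats_integral (m : ℕ) (hm : 2 ≤ m) (δ : ℝ) (hδ : 0 < δ)
    (hδ' : δ < 1 / (2 * ((m : ℝ) - 1))) :
    (∀ i, Auction.IsValuation (Auction.exampleVal m δ i)) ∧
    Auction.IsLPFeasible (Auction.exampleSol m) ∧
    Auction.lpValue (Auction.exampleVal m δ) (Auction.exampleSol m)
      = (m : ℝ) / 2 + 1 / (2 * ((m : ℝ) - 1)) - δ ∧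
    (m : ℝ) / 2 < Auction.lpValue (Auction.exampleVal m δ) (Auction.exampleSol m) ∧
    (3 ≤ m →
      IsGreatest {w : ℝ | ∃ X : Fin 2 → Finset (Fin m),
        Auction.IsAllocation X ∧ w = Auction.socialWelfare (Auction.exampleVal m δ) X}
        ((m : ℝ) / 2)) := by
  have hm' : (2 : ℝ) ≤ m := by exact_mod_cast hm
  have hhalf : 1 / (2 * ((m : ℝ) - 1)) ≤ 1 / 2 :=
    one_div_le_one_div_of_le two_pos (by linarith)
  have hval := Auction.lpValue_example hm δ
  exact ⟨Auction.isValuation_exampleVal (by linarith), Auction.isLPFeasible_exampleSol hm, hval,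
    by rw [hval]; linarith, fun h => Auction.isGreatest_socialWelfare_example h hδ.le⟩
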